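/- The strain-relaxation source term preserves the determinant of the distortion field: let A : ℝ → GL₃(ℝ) be differentiable and satisfy the ODE A'(t) = −A(t)·M(t) − c(t)·A(t)·G̊(t), where M(t) is any 3×3 matrix, c(t) any scalar, and G̊(t) = G(t) − (tr G(t)/3) I is the trace-free deviator of the Finger tensor G(t) = A(t)ᵀ A(t). Then the determinant satisfies d/dt det A(t) = −det A(t) · tr M(t). In particular, along the pure relaxation dynamics (M = 0) the determinant det A, and hence the density ρ = ρ₀ det A, is exactly conserved. -/

import Mathlib

open Matrix

/-!
Jacobi's formula `(det A)' = tr (adj A · A')` turns a right-multiplicative evolution `A' = A * B`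
into the scalar equation `(det A)' = det A · tr B`, because `adj A · A = det A · 1`. The evolution
equation has this form with `B = -M - c G̊`, and the relaxation part of `B` is trace-free, so
`tr B = -tr M`.
-/

section Jacobi

variable {n 𝕜 𝔸 : Type*} [Fintype n] [DecidableEq n] [NontriviallyNormedField 𝕜]
  [NormedCommRing 𝔸] [NormedAlgebra 𝕜 𝔸]

lemma trace_adjugate_mul_eq_sum_det_updateCol {R : Type*} [CommRing R] (A B : Matrix n n R) :
    (A.adjugate * B).trace = ∑ j, (A.updateCol j (B.col j)).det := by
  refine Finset.sum_congr rfl fun j _ => ?_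
  rw [← cramer_apply, cramer_eq_adjugate_mulVec]
  rfl

lemma prod_updateCol {m R : Type*} [CommMonoid R] (A : Matrix m n R) (b : m → R) (j : n)
    (f : n → m) :
    ∏ i, A.updateCol j b (f i) i = (∏ i ∈ Finset.univ.erase j, A (f i) i) * b (f j) := by
  rw [← Finset.prod_erase_mul _ _ (Finset.mem_univ j), updateCol_self]
  congr 1
  exact Finset.prod_congr rfl fun i hi => updateCol_ne (Finset.ne_of_mem_erase hi)

lemma hasDerivAt_det_sum_updateCol {A : 𝕜 → Matrix n n 𝔸} {A' : Matrix n n 𝔸} {t : 𝕜}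
    (hA : ∀ i j, HasDerivAt (fun s => A s i j) (A' i j) t) :
    HasDerivAt (fun s => (A s).det) (∑ j, ((A t).updateCol j (A'.col j)).det) t := by
  have leibniz (σ : Equiv.Perm n) :
      HasDerivAt (fun s => ∏ i, A s (σ i) i)
        (∑ j, ∏ i, (A t).updateCol j (A'.col j) (σ i) i) t := by
    simpa only [prod_updateCol, smul_eq_mul] using!
      HasDerivAt.fun_finsetProd fun i (_ : i ∈ Finset.univ) => hA (σ i) i
  simp only [det_apply']
  rw [Finset.sum_comm]
  simp only [← Finset.mul_sum]
  exact HasDerivAt.fun_sum fun σ _ => (leibniz σ).const_mul _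

theorem hasDerivAt_det {A : 𝕜 → Matrix n n 𝔸} {A' : Matrix n n 𝔸} {t : 𝕜}
    (hA : ∀ i j, HasDerivAt (fun s => A s i j) (A' i j) t) :
    HasDerivAt (fun s => (A s).det) ((A t).adjugate * A').trace t := by
  rw [trace_adjugate_mul_eq_sum_det_updateCol]
  exact hasDerivAt_det_sum_updateCol hA

theorem hasDerivAt_det_of_deriv_eq_mul {A : 𝕜 → Matrix n n 𝔸} {B : Matrix n n 𝔸} {t : 𝕜}
    (hA : ∀ i j, HasDerivAt (fun s => A s i j) ((A t * B) i j) t) :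
    HasDerivAt (fun s => (A s).det) ((A t).det * B.trace) t := by
  have trace_eq : ((A t).adjugate * (A t * B)).trace = (A t).det * B.trace := by
    rw [← Matrix.mul_assoc, adjugate_mul, smul_mul, Matrix.one_mul, trace_smul, smul_eq_mul]
  exact trace_eq ▸ hasDerivAt_det hA

end Jacobi

section Deviator

variable {n K : Type*} [Fintype n] [DecidableEq n] [Field K]

/-- The deviator `G̊ = G - (tr G / d) I` of a `d × d` tensor `G`, the trace-free part that drives
strain relaxation. The dimension `d` is encoded as the cardinality of the index type. -/
def deviator (G : Matrix n n K) : Matrix n n K :=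
  G - (G.trace / Fintype.card n) • (1 : Matrix n n K)

lemma trace_deviator [Nonempty n] [CharZero K] (G : Matrix n n K) : (deviator G).trace = 0 := by
  have card_ne_zero : (Fintype.card n : K) ≠ 0 := Nat.cast_ne_zero.mpr Fintype.card_ne_zero
  rw [deviator, trace_sub, trace_smul, trace_one, smul_eq_mul, div_mul_cancel₀ _ card_ne_zero,
    sub_self]

end Deviator

theorem strain_relaxation_preserves_det_general {n 𝕜 𝔸 : Type*} [Fintype n] [DecidableEq n]
    [RCLike 𝕜] [NormedCommRing 𝔸] [NormedAlgebra 𝕜 𝔸]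
    {A M D : 𝕜 → Matrix n n 𝔸} {c : 𝕜 → 𝔸} (hD : ∀ t, (D t).trace = 0)
    (hA : ∀ t i j, HasDerivAt (fun s => A s i j) ((-(A t * M t) - c t • (A t * D t)) i j) t) :
    (∀ t, HasDerivAt (fun s => (A s).det) (-(A t).det * (M t).trace) t) ∧
    ((∀ t, (M t).trace = 0) → ∀ t₁ t₂, (A t₁).det = (A t₂).det) := by
  have det_deriv (t : 𝕜) : HasDerivAt (fun s => (A s).det) (-(A t).det * (M t).trace) t := by
    have rhs_eq : -(A t * M t) - c t • (A t * D t) = A t * (-M t - c t • D t) := by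
      rw [Matrix.mul_sub, Matrix.mul_neg, Matrix.mul_smul]
    have trace_eq : (-M t - c t • D t).trace = -(M t).trace := by
      rw [trace_sub, trace_neg, trace_smul, hD, smul_zero, sub_zero]
    rw [neg_mul, ← mul_neg, ← trace_eq]
    exact hasDerivAt_det_of_deriv_eq_mul (rhs_eq ▸ hA t)
  refine ⟨det_deriv, fun hM => ?_⟩
  refine is_const_of_deriv_eq_zero (fun t => (det_deriv t).differentiableAt) fun t => ?_
  rw [(det_deriv t).deriv, hM, mul_zero]

/-- The strain-relaxation source term preserves the determinant of the distortion
field: if `A' = -A·M - c·A·G̊` with `G̊` the trace-free deviator of the Finger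
tensor `G = Aᵀ A`, then `(det A)' = -det A · tr M`; in particular, along the pure
relaxation dynamics (`M = 0`) the determinant of `A` (hence the density
`ρ = ρ₀ det A`) is exactly conserved. -/
theorem strain_relaxation_preserves_det
    (A M G Gdev : ℝ → Matrix (Fin 3) (Fin 3) ℝ) (c : ℝ → ℝ)
    (hG : ∀ t, G t = (A t)ᵀ * A t)
    (hGdev : ∀ t, Gdev t = G t - (Matrix.trace (G t) / 3) • (1 : Matrix (Fin 3) (Fin 3) ℝ))
    (hInv : ∀ t, IsUnit (A t).det)
    (hA : ∀ t i j, HasDerivAt (fun s => A s i j)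
      ((-(A t * M t) - c t • (A t * Gdev t)) i j) t) :
    (∀ t, HasDerivAt (fun s => (A s).det) (-(A t).det * Matrix.trace (M t)) t) ∧
    ((∀ t, M t = 0) → ∀ t₁ t₂, (A t₁).det = (A t₂).det) := by
  have gdev_eq (t : ℝ) : Gdev t = deviator (G t) := by
    rw [hGdev, deviator, Fintype.card_fin, Nat.cast_ofNat]
  have hD (t : ℝ) : (Gdev t).trace = 0 := gdev_eq t ▸ trace_deviator (G t)
  exact (strain_relaxation_preserves_det_general hD hA).imp_right fun h hM => h (by simp [hM])
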